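/- Let m ≥ 2, p ∈ (1, ∞), κ, Λ ∈ ℝ, R > 0, and assume C_{κ,Λ} > 0 and C_{4κ,Λ} > 0 on [0, R]. Then the first eigenvalue λ̄₁ of the problem (p-1)|φ'|^{p-2}φ'' - (4(m-1)T_{κ,Λ} + 3T_{4κ,Λ})|φ'|^{p-2}φ' = -λ|φ|^{p-2}φ on [0,R] with φ(0) = 0, φ'(R) = 0 equals the infimum of ∫₀^R |φ'|^p C_{κ,Λ}^{4m-4} C_{4κ,Λ}^3 ds / ∫₀^R |φ|^p C_{κ,Λ}^{4m-4} C_{4κ,Λ}^3 ds over nonzero φ ∈ W^{1,p}((0,R)) with φ(0) = 0. In particular this infimum is strictly positive. -/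

import Mathlib

open Real Set intervalIntegral

/-!
Write `Φ x = |x|^(p-2) x`, `N ψ = ∫₀^R |ψ|^p w` and `E ψ = ∫₀^R |ψ'|^p w`, where `ψ` is continuously
differentiable on `[0,R]` and `ψ 0 = 0`. Testing the equation of an eigenpair `(λ, φ)` against `φ`
gives `E φ = λ N φ` (`eigenpair_spec`), so the first eigenvalue is positive and is a value of the
Rayleigh quotient. It remains to bound it above by every value of the quotient. As it is the least
eigenvalue, it is enough to find, for any given value, some eigenvalue not exceeding it
(`exists_eigenpair_le`).

Let `S` be the supremum of `N` over `E ≤ 1`, which is finite because `E ≤ 1` bounds `ψ` uniformly.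
Homogeneity gives `N ψ ≤ S E ψ`, and `1 / S` turns out to be an eigenvalue. The set `E ≤ 1` is
equicontinuous, so a maximizing sequence `ψₙ` has a subsequence converging uniformly to a
continuous `g` with `N g = S` (`Admissible.exists_subseq`). Nothing is known about derivatives of
`g`; instead of a weak formulation, let `f` be the classical solution of
`(w Φ(f'))' = -(1/S) w Φ(g)`, `f 0 = 0`, `f' R = 0`, obtained by integrating twice
(`exists_solution`). With Young's inequality `p Φ(a) b ≤ (p-1)|a|^p + |b|^p`:

* testing against `f` gives `p E f = (p/S) ∫ w Φ(g) f ≤ (p-1) + N f / S ≤ (p-1) + E f`,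
  so `E f ≤ 1`;
* testing against `ψₙ` and letting `n → ∞` gives `p ≤ (p-1) E f + 1`, so `E f ≥ 1`.

Hence `E f = 1` and equality holds in the integrated Young inequality for `(g, f)`. Equality in
Young's inequality forces `a = b` (`plap_young_lt`), so `g = f` on `[0,R]`, and `f` is an
eigenfunction for `1 / S`.
-/

/-! ### The odd power `|x|^(p-2) x` -/

/-- The nonlinearity `|x|^(p-2) x` of the `p`-Laplacian. At `x = 0` it vanishes for every `p`, as the
second factor is `0`. -/
noncomputable def plap (p x : ℝ) : ℝ := |x| ^ (p - 2) * x

lemma abs_plap {p : ℝ} (hp : 1 < p) (x : ℝ) : |plap p x| = |x| ^ (p - 1) := by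
  rcases eq_or_ne x 0 with rfl | hx
  · simp [plap, Real.zero_rpow (by linarith : p - 1 ≠ 0)]
  · have h : 0 < |x| := abs_pos.2 hx
    rw [plap, abs_mul, abs_of_nonneg (by positivity)]
    conv_lhs => rw [← Real.rpow_one |x|, ← Real.rpow_mul (abs_nonneg x), ← Real.rpow_add h]
    congr 1; ring

lemma plap_mul_self {p : ℝ} (hp : 1 < p) (x : ℝ) : plap p x * x = |x| ^ p := by
  rcases eq_or_ne x 0 with rfl | hx
  · simp [plap, Real.zero_rpow (by linarith : p ≠ 0)]
  · have h : 0 < |x| := abs_pos.2 hx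
    rw [plap, mul_assoc, ← abs_mul_abs_self x, ← mul_assoc, ← Real.rpow_add_one h.ne',
      ← Real.rpow_add_one h.ne']
    congr 1; ring

lemma continuous_plap {p : ℝ} (hp : 1 < p) : Continuous (plap p) := by
  have h : plap p = fun x => max x 0 ^ (p - 1) - max (-x) 0 ^ (p - 1) := by
    funext x
    have h0 : (0 : ℝ) ^ (p - 1) = 0 := Real.zero_rpow (by linarith)
    rcases lt_trichotomy x 0 with hx | rfl | hx
    · rw [max_eq_right hx.le, max_eq_left (by linarith), h0, plap, abs_of_neg hx,
        show p - 1 = (p - 2) + 1 by ring, Real.rpow_add_one (by linarith)]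
      ring
    · simp [plap]
    · rw [max_eq_left hx.le, max_eq_right (by linarith), h0, plap, abs_of_pos hx,
        show p - 1 = (p - 2) + 1 by ring, Real.rpow_add_one (by linarith)]
      ring
  rw [h]
  have hp' : 0 ≤ p - 1 := by linarith
  exact ((continuous_id.max continuous_const).rpow_const fun _ => Or.inr hp').sub
    ((continuous_neg.max continuous_const).rpow_const fun _ => Or.inr hp')

/-- The maps `plap p` and `plap q` with conjugate exponents `p`, `q` are mutually inverse. -/
lemma plap_plap {p q : ℝ} (hp : 1 < p) (hpq : (p - 1) * (q - 1) = 1) (x : ℝ) :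
    plap q (plap p x) = x := by
  rcases eq_or_ne x 0 with rfl | hx
  · simp [plap]
  · have h : 0 < |x| := abs_pos.2 hx
    rw [plap, abs_plap hp, plap, ← Real.rpow_mul h.le, ← mul_assoc, ← Real.rpow_add h]
    rw [show (p - 1) * (q - 2) + (p - 2) = 0 by linear_combination hpq, Real.rpow_zero, one_mul]

/-- Strict Young inequality. After scaling `b = r a` it is Bernoulli's inequality
`1 + p (r - 1) < r ^ p` for `r ≠ 1`. -/
lemma plap_young_lt {p : ℝ} (hp : 1 < p) {a b : ℝ} (hab : a ≠ b) :
    p * (plap p a * b) < (p - 1) * |a| ^ p + |b| ^ p := by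
  rcases eq_or_ne a 0 with rfl | ha
  · have : 0 < |b| := abs_pos.2 hab.symm
    have : 0 < |b| ^ p := by positivity
    simpa [plap, Real.zero_rpow (by linarith : p ≠ 0)] using this
  · have hA : 0 < |a| ^ p := Real.rpow_pos_of_pos (abs_pos.2 ha) _
    obtain ⟨r, rfl⟩ : ∃ r, b = r * a := ⟨b / a, by field_simp⟩
    have hr : r ≠ 1 := by rintro rfl; simp at hab
    have e1 : plap p a * (r * a) = r * |a| ^ p := by rw [← plap_mul_self hp]; ring
    rw [e1, abs_mul, Real.mul_rpow (abs_nonneg _) (abs_nonneg _)]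
    have key : p * r < (p - 1) + |r| ^ p := by
      rcases lt_or_ge r 0 with h | h
      · have : 0 ≤ |r| ^ p := by positivity
        nlinarith
      · have := one_add_mul_self_lt_rpow_one_add (s := r - 1) (by linarith)
          (sub_ne_zero.2 hr) hp
        rw [abs_of_nonneg h]
        rw [show 1 + (r - 1) = r by ring] at this
        linarith
    nlinarith [mul_lt_mul_of_pos_right key hA]

lemma plap_young {p : ℝ} (hp : 1 < p) (a b : ℝ) :
    p * (plap p a * b) ≤ (p - 1) * |a| ^ p + |b| ^ p := by
  rcases eq_or_ne a b with rfl | h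
  · rw [plap_mul_self hp]; linarith
  · exact (plap_young_lt hp h).le

/-- The linear growth of `|x|` is absorbed by an arbitrarily small multiple of `|x|^p` up to a
constant. This replaces Hölder's inequality in the equicontinuity estimate. -/
lemma abs_le_delta {p : ℝ} (hp : 1 < p) {δ : ℝ} (hδ : 0 < δ) :
    ∃ C, 0 < C ∧ ∀ x : ℝ, |x| ≤ δ * |x| ^ p + C := by
  refine ⟨δ ^ (-(1 / (p - 1))), by positivity, fun x => ?_⟩
  set C := δ ^ (-(1 / (p - 1))) with hC
  have hC0 : 0 < C := by positivity
  have hx : 0 ≤ δ * |x| ^ p := by positivity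
  rcases le_or_gt |x| C with h | h
  · linarith
  · have h1 : C ^ (p - 1) ≤ |x| ^ (p - 1) := Real.rpow_le_rpow hC0.le h.le (by linarith)
    have h2 : C ^ (p - 1) = δ⁻¹ := by
      rw [hC, ← Real.rpow_mul hδ.le, neg_mul, one_div, inv_mul_cancel₀ (by linarith),
        Real.rpow_neg_one]
    have h3 : |x| ^ p = |x| ^ (p - 1) * |x| := by
      rw [← Real.rpow_add_one (by linarith)]; congr 1; ring
    have h4 : 1 ≤ δ * |x| ^ (p - 1) := by
      rw [h2] at h1
      calc (1 : ℝ) = δ * δ⁻¹ := by field_simp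
        _ ≤ _ := by gcongr
    rw [h3]
    nlinarith [abs_nonneg x]

/-! ### Admissible functions and their energies -/

/-- The pair of a function `ψ` with `ψ 0 = 0` and its derivative `ψ'`, continuous on `[0,R]`. The
derivative is two-sided also at the endpoints. -/
structure Admissible (R : ℝ) (ψ ψ' : ℝ → ℝ) : Prop where
  hasDeriv : ∀ s ∈ Icc (0 : ℝ) R, HasDerivAt ψ (ψ' s) s
  contDeriv : ContinuousOn ψ' (Icc 0 R)
  zero : ψ 0 = 0

lemma Admissible.cont {R : ℝ} {ψ ψ' : ℝ → ℝ} (h : Admissible R ψ ψ') :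
    ContinuousOn ψ (Icc 0 R) := HasDerivAt.continuousOn h.hasDeriv

lemma Admissible.const_mul {R : ℝ} {ψ ψ' : ℝ → ℝ} (h : Admissible R ψ ψ') (c : ℝ) :
    Admissible R (fun s => c * ψ s) (fun s => c * ψ' s) :=
  ⟨fun s hs => (h.hasDeriv s hs).const_mul c, continuousOn_const.mul h.contDeriv, by simp [h.zero]⟩

/-- The weighted integral `∫₀^R |g|^p w`, used both for a function and for its derivative. -/
noncomputable def energy (p R : ℝ) (w g : ℝ → ℝ) : ℝ := ∫ s in (0 : ℝ)..R, |g s| ^ p * w s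

lemma energy_const_mul (p R : ℝ) (w g : ℝ → ℝ) (c : ℝ) :
    energy p R w (fun s => c * g s) = |c| ^ p * energy p R w g := by
  unfold energy
  rw [← intervalIntegral.integral_const_mul]
  congr 1; funext s
  rw [abs_mul, Real.mul_rpow (abs_nonneg _) (abs_nonneg _)]; ring

section
variable {p R : ℝ} {w : ℝ → ℝ}

lemma continuousOn_density (hp : 1 < p) (hw : Continuous w) {g : ℝ → ℝ}
    (hg : ContinuousOn g (Icc 0 R)) : ContinuousOn (fun s => |g s| ^ p * w s) (Icc 0 R) :=
  (hg.abs.rpow_const fun _ _ => Or.inr (by linarith)).mul hw.continuousOn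

lemma energy_nonneg (hR : 0 < R) (hwp : ∀ s ∈ Icc (0 : ℝ) R, 0 < w s) (g : ℝ → ℝ) :
    0 ≤ energy p R w g :=
  intervalIntegral.integral_nonneg hR.le fun s hs =>
    mul_nonneg (Real.rpow_nonneg (abs_nonneg _) _) (hwp s hs).le

lemma energy_pos (hp : 1 < p) (hR : 0 < R) (hw : Continuous w)
    (hwp : ∀ s ∈ Icc (0 : ℝ) R, 0 < w s) {g : ℝ → ℝ} (hg : ContinuousOn g (Icc 0 R))
    (hne : ∃ s ∈ Icc (0 : ℝ) R, g s ≠ 0) : 0 < energy p R w g := by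
  obtain ⟨s, hs, hgs⟩ := hne
  exact intervalIntegral.integral_pos hR (continuousOn_density hp hw hg)
    (fun s hs => mul_nonneg (Real.rpow_nonneg (abs_nonneg _) _) (hwp s (Ioc_subset_Icc_self hs)).le)
    ⟨s, hs, mul_pos (Real.rpow_pos_of_pos (abs_pos.2 hgs) _) (hwp s hs)⟩

lemma Admissible.deriv_ne_zero {ψ ψ' : ℝ → ℝ} (h : Admissible R ψ ψ')
    (hne : ∃ s ∈ Icc (0 : ℝ) R, ψ s ≠ 0) : ∃ s ∈ Icc (0 : ℝ) R, ψ' s ≠ 0 := by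
  by_contra! hc
  obtain ⟨s, hs, hψ⟩ := hne
  refine hψ ?_
  rw [← h.zero]
  refine constant_of_has_deriv_right_zero h.cont (fun x hx => ?_) s hs
  have := (h.hasDeriv x (Ico_subset_Icc_self hx)).hasDerivWithinAt (s := Ici x)
  rwa [hc x (Ico_subset_Icc_self hx)] at this

/-- Integration by parts of a flux `P` vanishing at `R` against an admissible `ψ`. -/
lemma Admissible.integral_flux_mul_deriv (hR : 0 < R) {P P' ψ ψ' : ℝ → ℝ}
    (h : Admissible R ψ ψ') (hP : ∀ s ∈ Icc (0 : ℝ) R, HasDerivAt P (-P' s) s)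
    (hP' : ContinuousOn P' (Icc 0 R)) (hPR : P R = 0) :
    ∫ s in (0 : ℝ)..R, P s * ψ' s = ∫ s in (0 : ℝ)..R, P' s * ψ s := by
  have hI : uIcc 0 R = Icc 0 R := uIcc_of_le hR.le
  rw [integral_mul_deriv_eq_deriv_mul (u' := fun s => -P' s) (v := ψ)
    (by rwa [hI]) (by rw [hI]; exact h.hasDeriv)
    (hP'.neg.intervalIntegrable_of_Icc hR.le) (h.contDeriv.intervalIntegrable_of_Icc hR.le)]
  simp [hPR, h.zero]

/-! ### Compactness -/

/-- Equicontinuity of the admissible functions whose derivative has energy at most `1`. -/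
lemma Admissible.modulus (hp : 1 < p) (hR : 0 < R) (hw : Continuous w)
    (hwp : ∀ s ∈ Icc (0 : ℝ) R, 0 < w s) {δ : ℝ} (hδ : 0 < δ) :
    ∃ C, 0 < C ∧ ∀ ψ ψ', Admissible R ψ ψ' → energy p R w ψ' ≤ 1 →
      ∀ s ∈ Icc (0 : ℝ) R, ∀ t ∈ Icc (0 : ℝ) R, |ψ t - ψ s| ≤ δ + C * |t - s| := by
  obtain ⟨x₀, hx₀, hmin⟩ := isCompact_Icc.exists_isMinOn (nonempty_Icc.2 hR.le) hw.continuousOn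
  have hw0 := hwp x₀ hx₀
  obtain ⟨C, hC, hCx⟩ := abs_le_delta hp (mul_pos hδ hw0)
  refine ⟨C, hC, fun ψ ψ' h hE => ?_⟩
  have key : ∀ s ∈ Icc (0 : ℝ) R, ∀ t ∈ Icc (0 : ℝ) R, s ≤ t →
      |ψ t - ψ s| ≤ δ + C * |t - s| := by
    intro s hs t ht hst
    have hsub : Icc s t ⊆ Icc 0 R := Icc_subset_Icc hs.1 ht.2
    have hd := continuousOn_density hp hw h.contDeriv
    rw [← integral_eq_sub_of_hasDerivAt (f := ψ) (f' := ψ')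
      (by rw [uIcc_of_le hst]; exact fun x hx => h.hasDeriv x (hsub hx))
      ((h.contDeriv.mono hsub).intervalIntegrable_of_Icc hst)]
    have hint : IntervalIntegrable (fun x => |ψ' x| ^ p * w x) MeasureTheory.volume s t :=
      (hd.mono hsub).intervalIntegrable_of_Icc hst
    calc |∫ x in s..t, ψ' x| ≤ ∫ x in s..t, |ψ' x| := abs_integral_le_integral_abs hst
      _ ≤ ∫ x in s..t, (δ * (|ψ' x| ^ p * w x) + C) := by
          refine integral_mono_on hst ((h.contDeriv.mono hsub).abs.intervalIntegrable_of_Icc hst)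
            ((hint.const_mul δ).add intervalIntegrable_const) fun x hx => (hCx _).trans ?_
          have h1 : w x₀ ≤ w x := hmin (hsub hx)
          have h2 : 0 ≤ |ψ' x| ^ p := by positivity
          have := mul_le_mul_of_nonneg_left h1 (mul_nonneg hδ.le h2)
          linarith
      _ = δ * (∫ x in s..t, |ψ' x| ^ p * w x) + C * |t - s| := by
          rw [integral_add (hint.const_mul δ) intervalIntegrable_const,
            intervalIntegral.integral_const_mul, abs_of_nonneg (sub_nonneg.2 hst)]
          simp [mul_comm]
      _ ≤ δ * 1 + C * |t - s| := by
          gcongr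
          refine le_trans (integral_mono_interval hs.1 hst ht.2 ?_
            (hd.intervalIntegrable_of_Icc hR.le)) hE
          refine (MeasureTheory.ae_restrict_iff' measurableSet_Ioc).2 (Filter.Eventually.of_forall ?_)
          intro x hx
          exact mul_nonneg (Real.rpow_nonneg (abs_nonneg _) _) (hwp x (Ioc_subset_Icc_self hx)).le
      _ = _ := by rw [mul_one]
  intro s hs t ht
  rcases le_total s t with hst | hst
  · exact key s hs t ht hst
  · rw [abs_sub_comm, abs_sub_comm t s]
    exact key t ht s hs hst

lemma Admissible.bounded (hp : 1 < p) (hR : 0 < R) (hw : Continuous w)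
    (hwp : ∀ s ∈ Icc (0 : ℝ) R, 0 < w s) :
    ∃ M, 0 < M ∧ ∀ ψ ψ', Admissible R ψ ψ' → energy p R w ψ' ≤ 1 →
      ∀ s ∈ Icc (0 : ℝ) R, |ψ s| ≤ M := by
  obtain ⟨C, hC, h⟩ := Admissible.modulus hp hR hw hwp one_pos
  refine ⟨1 + C * R, by positivity, fun ψ ψ' hψ hE s hs => ?_⟩
  have := h ψ ψ' hψ hE 0 ⟨le_rfl, hR.le⟩ s hs
  rw [hψ.zero, sub_zero, sub_zero, abs_of_nonneg hs.1] at this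
  have h2 : C * s ≤ C * R := by gcongr; exact hs.2
  linarith

/-- Arzelà–Ascoli: a sequence with derivatives of energy at most `1` has a subsequence converging on
`[0,R]` to the restriction of a continuous function. -/
lemma Admissible.exists_subseq (hp : 1 < p) (hR : 0 < R) (hw : Continuous w)
    (hwp : ∀ s ∈ Icc (0 : ℝ) R, 0 < w s) {ψ ψ' : ℕ → ℝ → ℝ}
    (hψ : ∀ n, Admissible R (ψ n) (ψ' n)) (hE : ∀ n, energy p R w (ψ' n) ≤ 1) :
    ∃ (g : ℝ → ℝ) (k : ℕ → ℕ), Continuous g ∧ StrictMono k ∧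
      ∀ s ∈ Icc (0 : ℝ) R, Filter.Tendsto (fun n => ψ (k n) s) Filter.atTop (nhds (g s)) := by
  obtain ⟨M, hM, hbd⟩ := Admissible.bounded hp hR hw hwp
  let r : ℕ → BoundedContinuousFunction (Icc (0 : ℝ) R) ℝ := fun n =>
    BoundedContinuousFunction.mkOfCompact ⟨(Icc 0 R).domRestrict (ψ n), (hψ n).cont.domRestrict⟩
  have hr : ∀ n x, r n x = ψ n x := fun n x => rfl
  have hcomp : IsCompact (closure (range r)) := by
    refine BoundedContinuousFunction.arzela_ascoli (Icc (-M) M) isCompact_Icc _ ?_ ?_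
    · rintro _ x ⟨n, rfl⟩
      exact abs_le.1 (hbd _ _ (hψ n) (hE n) x x.2)
    · intro x
      rw [Metric.equicontinuousAt_iff_right]
      intro ε hε
      obtain ⟨C, hC, hmod⟩ := Admissible.modulus hp hR hw hwp (half_pos hε)
      filter_upwards [Metric.ball_mem_nhds x (show 0 < ε / 2 / C by positivity)] with y hy
      rintro ⟨_, n, rfl⟩
      have h1 := hmod _ _ (hψ n) (hE n) y y.2 x x.2
      rw [Metric.mem_ball, dist_comm, Subtype.dist_eq, Real.dist_eq, lt_div_iff₀ hC] at hy
      change dist (r n x) (r n y) < ε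
      rw [hr, hr, Real.dist_eq]
      linarith
  obtain ⟨g, -, k, hk, hlim⟩ := hcomp.tendsto_subseq (x := r) fun n => subset_closure ⟨n, rfl⟩
  refine ⟨IccExtend hR.le g, k, g.continuous.Icc_extend', hk, fun s hs => ?_⟩
  rw [IccExtend_of_mem _ _ hs]
  exact ((BoundedContinuousFunction.lipschitz_eval_const
    (⟨s, hs⟩ : Icc (0 : ℝ) R)).continuous.tendsto g).comp hlim

lemma tendsto_integral_comp (hR : 0 < R) {G : ℝ → ℝ → ℝ} (hG : Continuous (Function.uncurry G))
    {ψ : ℕ → ℝ → ℝ} {g : ℝ → ℝ} {M : ℝ} (hψ : ∀ n, ContinuousOn (ψ n) (Icc 0 R))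
    (hM : ∀ n, ∀ s ∈ Icc (0 : ℝ) R, |ψ n s| ≤ M)
    (hlim : ∀ s ∈ Icc (0 : ℝ) R, Filter.Tendsto (fun n => ψ n s) Filter.atTop (nhds (g s))) :
    Filter.Tendsto (fun n => ∫ s in (0 : ℝ)..R, G s (ψ n s)) Filter.atTop
      (nhds (∫ s in (0 : ℝ)..R, G s (g s))) := by
  obtain ⟨B, hB⟩ := (isCompact_Icc.prod (isCompact_Icc (a := -M) (b := M))).exists_bound_of_continuousOn
    (f := Function.uncurry G) (s := Icc (0 : ℝ) R ×ˢ Icc (-M) M) hG.continuousOn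
  have hsub : uIoc 0 R ⊆ Icc 0 R := by rw [uIoc_of_le hR.le]; exact Ioc_subset_Icc_self
  refine tendsto_integral_filter_of_dominated_convergence (fun _ => B)
    (Filter.Eventually.of_forall fun n => ?_) (Filter.Eventually.of_forall fun n =>
      Filter.Eventually.of_forall fun s hs => ?_) intervalIntegrable_const
    (Filter.Eventually.of_forall fun s hs => ?_)
  · have : ContinuousOn (fun s => G s (ψ n s)) (Icc 0 R) :=
      hG.comp_continuousOn (continuousOn_id.prodMk (hψ n))
    exact (this.mono hsub).aestronglyMeasurable measurableSet_uIoc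
  · exact hB (s, ψ n s) ⟨hsub hs, abs_le.1 (hM n s (hsub hs))⟩
  · exact ((hG.comp (Continuous.prodMk_right s)).tendsto _).comp (hlim s (hsub hs))

/-! ### Existence of eigenvalues -/

/-- Solution of `(w Φ(f'))' = -h`, `f 0 = 0`, `f' R = 0` by two integrations: the flux is
`P s = ∫_s^R h`, and `f' = Φ⁻¹ (P / w)`. Outside `[0,R]` the weight may vanish and `P / w` may be a
junk value, but near each point of `[0,R]` it does not. -/
lemma exists_solution (hp : 1 < p) (hw : Continuous w)
    (hwp : ∀ s ∈ Icc (0 : ℝ) R, 0 < w s) {h : ℝ → ℝ} (hh : Continuous h) :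
    ∃ f f', Admissible R f f' ∧ f' R = 0 ∧
      ∀ s ∈ Icc (0 : ℝ) R, HasDerivAt (fun t => w t * plap p (f' t)) (-h s) s := by
  obtain ⟨q, hq, hpq⟩ : ∃ q, 1 < q ∧ (p - 1) * (q - 1) = 1 := by
    have h0 : 0 < p - 1 := by linarith
    refine ⟨1 + 1 / (p - 1), by linarith [one_div_pos.2 h0], by field_simp; ring⟩
  set P : ℝ → ℝ := fun s => -∫ t in R..s, h t with hPdef
  have hP : ∀ s, HasDerivAt P (-h s) s := fun s =>
    (integral_hasDerivAt_right (hh.intervalIntegrable _ _)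
      (hh.stronglyMeasurableAtFilter _ _) hh.continuousAt).neg
  have hPc : Continuous P := continuous_iff_continuousAt.2 fun s => (hP s).continuousAt
  set g : ℝ → ℝ := fun s => plap q (P s / w s) with hg
  have hgm : Measurable g :=
    (continuous_plap hq).measurable.comp (hPc.measurable.div hw.measurable)
  have hgc : ∀ s ∈ Icc (0 : ℝ) R, ContinuousAt g s := fun s hs =>
    (continuous_plap hq).continuousAt.comp
      (hPc.continuousAt.div hw.continuousAt (hwp s hs).ne')
  have hgon : ContinuousOn g (Icc 0 R) := fun s hs => (hgc s hs).continuousWithinAt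
  refine ⟨fun s => ∫ t in (0 : ℝ)..s, g t, g, ⟨fun s hs => ?_, hgon, by simp⟩, ?_, fun s hs => ?_⟩
  · exact integral_hasDerivAt_right
      ((hgon.mono (Icc_subset_Icc le_rfl hs.2)).intervalIntegrable_of_Icc hs.1)
      (hgm.stronglyMeasurable.stronglyMeasurableAtFilter) (hgc s hs)
  · simp [hg, hPdef, plap]
  · refine (hP s).congr_of_eventuallyEq ?_
    filter_upwards [hw.continuousAt.eventually_ne (hwp s hs).ne'] with t ht
    rw [hg]
    dsimp only
    rw [plap_plap hq (by linarith)]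
    field_simp

/-- Some eigenvalue is at most the Rayleigh quotient of a given nonzero admissible function: the
reciprocal of the best constant `S` in `N ψ ≤ S E ψ`. -/
lemma exists_eigenpair_le (hp : 1 < p) (hR : 0 < R) (hw : Continuous w)
    (hwp : ∀ s ∈ Icc (0 : ℝ) R, 0 < w s) {ψ₀ ψ₀' : ℝ → ℝ} (hψ₀ : Admissible R ψ₀ ψ₀')
    (hne₀ : ∃ s ∈ Icc (0 : ℝ) R, ψ₀ s ≠ 0) :
    ∃ lam f f', Admissible R f f' ∧ f' R = 0 ∧ (∃ s ∈ Icc (0 : ℝ) R, f s ≠ 0) ∧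
      (∀ s ∈ Icc (0 : ℝ) R,
        HasDerivAt (fun t => w t * plap p (f' t)) (-(lam * (w s * plap p (f s)))) s) ∧
      lam * energy p R w ψ₀ ≤ energy p R w ψ₀' := by
  have hp0 : 0 < p := by linarith
  obtain ⟨M, hM, hbd⟩ := Admissible.bounded hp hR hw hwp
  set A : Set ℝ := {x | ∃ ψ ψ', Admissible R ψ ψ' ∧ energy p R w ψ' ≤ 1 ∧ energy p R w ψ = x}
    with hA
  have hAb : BddAbove A := by
    refine ⟨energy p R w (fun _ => M), ?_⟩
    rintro _ ⟨ψ, ψ', h, hE, rfl⟩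
    refine integral_mono_on hR.le
      ((continuousOn_density hp hw h.cont).intervalIntegrable_of_Icc hR.le)
      ((continuousOn_density hp hw continuousOn_const).intervalIntegrable_of_Icc hR.le)
      fun s hs => ?_
    have h1 : |ψ s| ≤ |M| := (hbd ψ ψ' h hE s hs).trans (le_abs_self M)
    have := (hwp s hs).le
    gcongr
  set S := sSup A with hS
  have hpoinc : ∀ ψ ψ', Admissible R ψ ψ' → energy p R w ψ ≤ S * energy p R w ψ' := by
    intro ψ ψ' h
    by_cases hne : ∃ s ∈ Icc (0 : ℝ) R, ψ s ≠ 0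
    · have hE : 0 < energy p R w ψ' :=
        energy_pos hp hR hw hwp h.contDeriv (h.deriv_ne_zero hne)
      -- Rescale to unit energy.
      set c := energy p R w ψ' ^ (-(1 / p)) with hc
      have hcp : |c| ^ p = (energy p R w ψ')⁻¹ := by
        rw [abs_of_nonneg (by positivity), hc, ← Real.rpow_mul hE.le,
          show -(1 / p) * p = -1 by field_simp, Real.rpow_neg_one]
      have : (energy p R w ψ')⁻¹ * energy p R w ψ ≤ S := by
        refine le_csSup hAb ⟨_, _, h.const_mul c, ?_, ?_⟩
        · rw [energy_const_mul, hcp, inv_mul_cancel₀ hE.ne']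
        · rw [energy_const_mul, hcp]
      rwa [inv_mul_le_iff₀ hE, mul_comm] at this
    · push Not at hne
      have h0 : energy p R w ψ = 0 := by
        unfold energy
        rw [integral_congr (g := fun _ => 0), intervalIntegral.integral_zero]
        intro s hs
        rw [uIcc_of_le hR.le] at hs
        simp [hne s hs, Real.zero_rpow hp0.ne']
      have hS0 : 0 ≤ S := by
        refine Real.sSup_nonneg ?_
        rintro _ ⟨ψ, -, -, -, rfl⟩
        exact energy_nonneg hR hwp ψ
      rw [h0]
      exact mul_nonneg hS0 (energy_nonneg hR hwp _)
  have hN₀ : 0 < energy p R w ψ₀ := energy_pos hp hR hw hwp hψ₀.cont hne₀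
  have hE₀ : 0 < energy p R w ψ₀' :=
    energy_pos hp hR hw hwp hψ₀.contDeriv (hψ₀.deriv_ne_zero hne₀)
  have hSpos : 0 < S := by
    by_contra! hcon
    have := hpoinc _ _ hψ₀
    nlinarith
  have hAne : A.Nonempty := by
    by_contra hcon
    rw [Set.not_nonempty_iff_eq_empty] at hcon
    rw [hS, hcon, Real.sSup_empty] at hSpos
    exact lt_irrefl _ hSpos
  obtain ⟨u, -, hu, huA⟩ := exists_seq_tendsto_sSup hAne hAb
  choose ψ ψ' hψ hψE hψu using huA
  obtain ⟨g, k, hgc, hk, hlim⟩ := Admissible.exists_subseq hp hR hw hwp hψ hψE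
  have hconv : ∀ G : ℝ → ℝ → ℝ, Continuous (Function.uncurry G) →
      Filter.Tendsto (fun n => ∫ s in (0 : ℝ)..R, G s (ψ (k n) s)) Filter.atTop
        (nhds (∫ s in (0 : ℝ)..R, G s (g s))) := fun G hG =>
    tendsto_integral_comp hR hG (fun n => (hψ _).cont)
      (fun n => hbd _ _ (hψ _) (hψE _)) hlim
  have hNg : energy p R w g = S := by
    have h1 := hconv (fun s x => |x| ^ p * w s)
      ((continuous_snd.abs.rpow_const fun _ => Or.inr hp0.le).mul (hw.comp continuous_fst))
    have h2 : Filter.Tendsto (fun n => energy p R w (ψ (k n))) Filter.atTop (nhds S) := by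
      simp_rw [hψu]
      exact hu.comp hk.tendsto_atTop
    exact tendsto_nhds_unique h1 h2
  have hwg : Continuous fun s => w s * plap p (g s) := hw.mul ((continuous_plap hp).comp hgc)
  have hh : Continuous fun s => S⁻¹ * (w s * plap p (g s)) := continuous_const.mul hwg
  obtain ⟨f, f', hf, hfR, hfode⟩ := exists_solution hp hw hwp hh
  have hflux : ∀ φ φ', Admissible R φ φ' → ∫ s in (0 : ℝ)..R, w s * plap p (f' s) * φ' s =
      S⁻¹ * ∫ s in (0 : ℝ)..R, w s * plap p (g s) * φ s := by
    intro φ φ' hφ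
    rw [hφ.integral_flux_mul_deriv hR hfode hh.continuousOn (by simp [hfR, plap]),
      ← intervalIntegral.integral_const_mul]
    simp_rw [mul_assoc]
  have hyoung : ∀ a b : ℝ → ℝ, ContinuousOn a (Icc 0 R) → ContinuousOn b (Icc 0 R) →
      (p * (∫ s in (0 : ℝ)..R, w s * plap p (a s) * b s) ≤
        (p - 1) * energy p R w a + energy p R w b) ∧
      ((∃ s ∈ Icc (0 : ℝ) R, a s ≠ b s) → p * (∫ s in (0 : ℝ)..R, w s * plap p (a s) * b s) <
        (p - 1) * energy p R w a + energy p R w b) := by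
    intro a b ha hb
    have ca := continuousOn_density hp hw ha
    have cb := continuousOn_density hp hw hb
    have cab : ContinuousOn (fun s => w s * plap p (a s) * b s) (Icc 0 R) :=
      (hw.continuousOn.mul ((continuous_plap hp).comp_continuousOn ha)).mul hb
    have e : (p - 1) * energy p R w a + energy p R w b -
        p * (∫ s in (0 : ℝ)..R, w s * plap p (a s) * b s) =
        ∫ s in (0 : ℝ)..R, ((p - 1) * (|a s| ^ p * w s) + |b s| ^ p * w s -
          p * (w s * plap p (a s) * b s)) := by
      have ia := (ca.intervalIntegrable_of_Icc hR.le (μ := MeasureTheory.volume)).const_mul (p - 1)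
      have ib := cb.intervalIntegrable_of_Icc hR.le (μ := MeasureTheory.volume)
      rw [integral_sub (ia.add ib)
        ((cab.intervalIntegrable_of_Icc hR.le).const_mul p), integral_add ia ib,
        intervalIntegral.integral_const_mul, intervalIntegral.integral_const_mul]
      rfl
    have ef : ∀ s, (p - 1) * (|a s| ^ p * w s) + |b s| ^ p * w s -
          p * (w s * plap p (a s) * b s) =
        ((p - 1) * |a s| ^ p + |b s| ^ p - p * (plap p (a s) * b s)) * w s := fun s => by ring
    have hnn : ∀ s ∈ Icc (0 : ℝ) R, 0 ≤ (p - 1) * (|a s| ^ p * w s) + |b s| ^ p * w s -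
          p * (w s * plap p (a s) * b s) := fun s hs => by
      rw [ef]
      exact mul_nonneg (sub_nonneg.2 (plap_young hp _ _)) (hwp s hs).le
    refine ⟨sub_nonneg.1 ?_, fun ⟨s, hs, hab⟩ => sub_pos.1 ?_⟩
    · rw [e]
      exact intervalIntegral.integral_nonneg hR.le hnn
    · rw [e]
      refine intervalIntegral.integral_pos hR
        (((continuousOn_const.mul ca).add cb).sub (continuousOn_const.mul cab))
        (fun s hs => hnn s (Ioc_subset_Icc_self hs)) ⟨s, hs, ?_⟩
      rw [ef]
      exact mul_pos (sub_pos.2 (plap_young_lt hp hab)) (hwp s hs)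
  have hself : ∀ a : ℝ → ℝ, ∫ s in (0 : ℝ)..R, w s * plap p (a s) * a s = energy p R w a := by
    intro a
    unfold energy
    congr 1; funext s
    rw [mul_assoc, plap_mul_self hp, mul_comm]
  set e := energy p R w f' with he
  set I := ∫ s in (0 : ℝ)..R, w s * plap p (g s) * f s with hI
  have h1 : e = S⁻¹ * I := by rw [he, ← hself, hflux f f' hf]
  have h1' : I = S * e := by rw [h1]; field_simp
  have h2 : energy p R w f ≤ S * e := hpoinc f f' hf
  have h3 := (hyoung g f hgc.continuousOn hf.cont).1
  rw [hNg, ← hI, h1'] at h3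
  -- Testing the equation of `f` against `f` itself.
  have he1 : e ≤ 1 := by
    have : S * ((p - 1) * e) ≤ S * (p - 1) := by linarith
    have := le_of_mul_le_mul_left this hSpos
    nlinarith
  -- Testing the equation of `f` against the maximizing sequence.
  have he2 : 1 ≤ e := by
    have hl := hconv (fun s x => w s * plap p (g s) * x)
      ((hwg.comp continuous_fst).mul continuous_snd)
    rw [hself, hNg] at hl
    have hl2 : S ≤ S * (((p - 1) * e + 1) / p) := by
      refine le_of_tendsto' hl fun n => ?_
      have h4 := (hyoung f' (ψ' (k n)) hf.contDeriv (hψ (k n)).contDeriv).1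
      rw [hflux _ _ (hψ (k n)), ← he] at h4
      have h5 := hψE (k n)
      have h6 : S⁻¹ * (∫ s in (0 : ℝ)..R, w s * plap p (g s) * ψ (k n) s) ≤
          ((p - 1) * e + 1) / p := by
        rw [le_div_iff₀ hp0]; linarith
      rwa [inv_mul_le_iff₀ hSpos] at h6
    have : 1 ≤ ((p - 1) * e + 1) / p := by nlinarith
    rw [le_div_iff₀ hp0] at this
    nlinarith
  have hee : e = 1 := le_antisymm he1 he2
  -- Equality holds in Young's inequality for `g` and `f`.
  have hgf : ∀ s ∈ Icc (0 : ℝ) R, g s = f s := by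
    by_contra! hcon
    have h4 := (hyoung g f hgc.continuousOn hf.cont).2 hcon
    rw [hNg, ← hI, h1', hee] at h4
    rw [hee] at h2
    linarith
  refine ⟨S⁻¹, f, f', hf, hfR, ?_, fun s hs => ?_, ?_⟩
  · by_contra! hcon
    have : energy p R w g = 0 := by
      unfold energy
      rw [integral_congr (g := fun _ => 0), intervalIntegral.integral_zero]
      intro s hs
      rw [uIcc_of_le hR.le] at hs
      simp [hgf s hs, hcon s hs, Real.zero_rpow hp0.ne']
    linarith
  · rw [← hgf s hs]
    exact hfode s hs
  · rw [inv_mul_le_iff₀ hSpos]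
    exact hpoinc _ _ hψ₀

/-- An eigenfunction is admissible, its derivative being `Φ⁻¹` of the continuous flux over `w`, and
its Rayleigh quotient is the eigenvalue. -/
lemma eigenpair_spec (hp : 1 < p) (hR : 0 < R) (hw : Continuous w)
    (hwp : ∀ s ∈ Icc (0 : ℝ) R, 0 < w s) {lam : ℝ} {φ φ' : ℝ → ℝ}
    (hφ : ∀ s ∈ Icc (0 : ℝ) R, HasDerivAt φ (φ' s) s)
    (hode : ∀ s ∈ Icc (0 : ℝ) R,
      HasDerivAt (fun t => w t * plap p (φ' t)) (-(lam * (w s * plap p (φ s)))) s)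
    (h0 : φ 0 = 0) (hφR : φ' R = 0) :
    Admissible R φ φ' ∧ energy p R w φ' = lam * energy p R w φ := by
  obtain ⟨q, hpq⟩ : ∃ q, (p - 1) * (q - 1) = 1 := by
    have h0 : 0 < p - 1 := by linarith
    exact ⟨1 + 1 / (p - 1), by field_simp; ring⟩
  have hq : 1 < q := by
    by_contra! hcon
    nlinarith
  have hPc : ContinuousOn (fun t => w t * plap p (φ' t)) (Icc 0 R) := HasDerivAt.continuousOn hode
  have hc : ContinuousOn φ' (Icc 0 R) := by
    refine ((continuous_plap hq).comp_continuousOn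
      (hPc.div hw.continuousOn fun s hs => (hwp s hs).ne')).congr fun s hs => ?_
    have := (hwp s hs).ne'
    rw [Function.comp_apply, Pi.div_apply, mul_div_cancel_left₀ _ this, plap_plap hp hpq]
  have hadm : Admissible R φ φ' := ⟨hφ, hc, h0⟩
  refine ⟨hadm, ?_⟩
  have key := hadm.integral_flux_mul_deriv hR hode
    (continuousOn_const.mul (hw.continuousOn.mul
      ((continuous_plap hp).comp_continuousOn hadm.cont))) (by simp [hφR, plap])
  unfold energy
  rw [← intervalIntegral.integral_const_mul]
  refine Eq.trans ?_ (key.trans ?_)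
  · congr 1; funext s
    rw [mul_assoc, plap_mul_self hp, mul_comm]
  · congr 1; funext s
    rw [mul_assoc, mul_assoc, plap_mul_self hp, mul_comm (w s)]

end

/-! ### The variational characterization -/

/-- Variational characterization of the first Dirichlet–Neumann eigenvalue of the
weighted one-dimensional `p`-Laplacian eigenvalue problem
`(w|φ'|^{p-2}φ')' = -λ w |φ|^{p-2}φ` on `[0,R]` with `φ(0)=0`, `φ'(R)=0`, where
`w = C_{κ,Λ}^{4m-4} C_{4κ,Λ}^3`: the first eigenvalue equals the infimum of the
Rayleigh quotient `∫₀^R |φ'|^p w / ∫₀^R |φ|^p w` over nonzero admissible `φ` with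
`φ(0) = 0`, and in particular it is strictly positive. -/
theorem stmt11 (m : ℕ) (hm : 2 ≤ m) (p κ Λ R : ℝ) (hp1 : 1 < p) (hR : 0 < R)
    (C1 C1' C2 C2' : ℝ → ℝ)
    (hC1 : ∀ t, HasDerivAt C1 (C1' t) t)
    (hC1' : ∀ t, HasDerivAt C1' (-κ * C1 t) t)
    (hC10 : C1 0 = 1) (hC1'0 : C1' 0 = -Λ)
    (hC2 : ∀ t, HasDerivAt C2 (C2' t) t)
    (hC2' : ∀ t, HasDerivAt C2' (-(4*κ) * C2 t) t)
    (hC20 : C2 0 = 1) (hC2'0 : C2' 0 = -Λ)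
    (hpos1 : ∀ t ∈ Set.Icc (0:ℝ) R, 0 < C1 t)
    (hpos2 : ∀ t ∈ Set.Icc (0:ℝ) R, 0 < C2 t)
    (w : ℝ → ℝ) (hw : ∀ s, w s = C1 s ^ (4*m - 4) * C2 s ^ 3)
    (lam1 : ℝ)
    -- lam1 is the first (smallest) eigenvalue of the problem
    (hlam : IsLeast {lam : ℝ | ∃ φ φ' : ℝ → ℝ,
      (∀ s ∈ Set.Icc (0:ℝ) R, HasDerivAt φ (φ' s) s) ∧
      (∀ s ∈ Set.Icc (0:ℝ) R,
        HasDerivAt (fun t => w t * |φ' t| ^ (p-2) * φ' t)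
          (-lam * w s * |φ s| ^ (p-2) * φ s) s) ∧
      φ 0 = 0 ∧ φ' R = 0 ∧ ∃ s ∈ Set.Icc (0:ℝ) R, φ s ≠ 0} lam1) :
    lam1 = sInf {q : ℝ | ∃ φ φ' : ℝ → ℝ,
      (∀ s ∈ Set.Icc (0:ℝ) R, HasDerivAt φ (φ' s) s) ∧
      ContinuousOn φ' (Set.Icc (0:ℝ) R) ∧
      φ 0 = 0 ∧ (∃ s ∈ Set.Icc (0:ℝ) R, φ s ≠ 0) ∧
      q = (∫ s in (0:ℝ)..R, |φ' s| ^ p * w s) / (∫ s in (0:ℝ)..R, |φ s| ^ p * w s)} ∧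
    0 < lam1 := by
  have hwc : Continuous w := by
    have c1 : Continuous C1 := continuous_iff_continuousAt.2 fun t => (hC1 t).continuousAt
    have c2 : Continuous C2 := continuous_iff_continuousAt.2 fun t => (hC2 t).continuousAt
    rw [funext hw]
    exact (c1.pow _).mul (c2.pow _)
  have hwp : ∀ s ∈ Icc (0 : ℝ) R, 0 < w s := fun s hs => by
    rw [hw]
    exact mul_pos (pow_pos (hpos1 s hs) _) (pow_pos (hpos2 s hs) _)
  have hl : ∀ (lam : ℝ) (φ φ' : ℝ → ℝ) (s : ℝ),
      HasDerivAt (fun t => w t * |φ' t| ^ (p-2) * φ' t) (-lam * w s * |φ s| ^ (p-2) * φ s) s ↔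
      HasDerivAt (fun t => w t * plap p (φ' t)) (-(lam * (w s * plap p (φ s)))) s := by
    intro lam φ φ' s
    simp only [plap, neg_mul, mul_assoc]
  obtain ⟨⟨φ, φ', hφ, hode, h0, hφR, hne⟩, hleast⟩ := hlam
  obtain ⟨hadm, hE⟩ := eigenpair_spec hp1 hR hwc hwp hφ
    (fun s hs => (hl _ _ _ _).1 (hode s hs)) h0 hφR
  have hN : 0 < energy p R w φ := energy_pos hp1 hR hwc hwp hadm.cont hne
  have hE' : 0 < energy p R w φ' :=
    energy_pos hp1 hR hwc hwp hadm.contDeriv (hadm.deriv_ne_zero hne)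
  refine ⟨(IsLeast.csInf_eq ⟨?_, ?_⟩).symm, ?_⟩
  · refine ⟨φ, φ', hφ, hadm.contDeriv, h0, hne, ?_⟩
    change lam1 = energy p R w φ' / energy p R w φ
    rw [hE, mul_div_cancel_right₀ _ hN.ne']
  · rintro _ ⟨ψ, ψ', hψ, hψc, hψ0, hψne, rfl⟩
    have hψa : Admissible R ψ ψ' := ⟨hψ, hψc, hψ0⟩
    have hNψ : 0 < energy p R w ψ := energy_pos hp1 hR hwc hwp hψa.cont hψne
    obtain ⟨lam, f, f', hf, hfR, hfne, hfode, hle⟩ :=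
      exists_eigenpair_le hp1 hR hwc hwp hψa hψne
    have h1 : lam1 ≤ lam := hleast ⟨f, f', hf.hasDeriv,
      fun s hs => (hl _ _ _ _).2 (hfode s hs), hf.zero, hfR, hfne⟩
    change lam1 ≤ energy p R w ψ' / energy p R w ψ
    exact h1.trans ((le_div_iff₀ hNψ).2 hle)
  · rw [hE] at hE'
    exact pos_of_mul_pos_left hE' hN.le
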